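/- arXiv:0805.0674 — 5 statements merged into one kernel-verified Lean document; each statement's English description precedes it below -/
import Mathlib

section
/- Let μ be a fuzzy field membership function on ℝ such that there exists a > 0 with μ(x) ≥ a for all x ∈ ℝ. Then a sequence (x_n) of real numbers converges to l in ℝ (in the usual sense) if and only if (x_n) μ-converges to l. -/
/-- A fuzzy field membership function on ℝ. -/
def IsFuzzyField (μ : ℝ → ℝ) : Prop :=
  (∀ x : ℝ, 0 ≤ μ x ∧ μ x ≤ 1) ∧
  (∀ x y : ℝ, μ (x + y) ≥ min (μ x) (μ y)) ∧
  (∀ x : ℝ, μ (-x) ≥ μ x) ∧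
  (∀ x y : ℝ, μ (x * y) ≥ min (μ x) (μ y)) ∧
  (∀ x : ℝ, μ x⁻¹ ≥ μ x) ∧
  μ 0 = 1 ∧ μ 1 = 1

/-- μ-convergence of a real sequence. -/
def MuTendsto (μ : ℝ → ℝ) (x : ℕ → ℝ) (x₀ : ℝ) : Prop :=
  ∀ ε > 0, ∃ k : ℕ, ∀ n ≥ k, |x n - x₀| * μ (x n - x₀) < ε

theorem stmt_12 (μ : ℝ → ℝ) (hμ : IsFuzzyField μ)
    (a : ℝ) (ha : a > 0) (hbound : ∀ x : ℝ, μ x ≥ a)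
    (x : ℕ → ℝ) (l : ℝ) :
    Filter.Tendsto x Filter.atTop (nhds l) ↔ MuTendsto μ x l := by
  rw [Metric.tendsto_atTop]
  constructor
  · intro h ε hε
    obtain ⟨k, hk⟩ := h ε hε
    refine ⟨k, fun n hn => lt_of_le_of_lt ?_ (hk n hn)⟩
    rw [Real.dist_eq]
    exact mul_le_of_le_one_right (abs_nonneg _) (hμ.1 _).2
  · intro h ε hε
    obtain ⟨k, hk⟩ := h (ε * a) (mul_pos hε ha)
    refine ⟨k, fun n hn => ?_⟩
    rw [Real.dist_eq]
    refine lt_of_mul_lt_mul_right (lt_of_le_of_lt ?_ (hk n hn)) ha.le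
    exact mul_le_mul_of_nonneg_left (hbound _) (abs_nonneg _)
end

section
/- Let μ be a fuzzy field membership function on ℝ such that there exists a > 0 with μ(x) ≥ a for all x ∈ ℝ. If a sequence (x_n) of real numbers μ-converges to l and also μ-converges to l′, then l = l′ (i.e., the μ-limit is unique). -/
/-- If `μ` is bounded below by a positive constant, μ-convergence implies ordinary convergence. -/
theorem MuTendsto.tendsto {μ : ℝ → ℝ} {a : ℝ} (ha : 0 < a) (hbound : ∀ x : ℝ, a ≤ μ x)
    {x : ℕ → ℝ} {l : ℝ} (h : MuTendsto μ x l) : Filter.Tendsto x Filter.atTop (nhds l) := by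
  refine Metric.tendsto_atTop.2 fun ε hε => ?_
  obtain ⟨k, hk⟩ := h (ε * a) (mul_pos hε ha)
  refine ⟨k, fun n hn => ?_⟩
  rw [Real.dist_eq]
  exact lt_of_mul_lt_mul_right
    ((mul_le_mul_of_nonneg_left (hbound _) (abs_nonneg _)).trans_lt (hk n hn)) ha.le

theorem stmt_13 (μ : ℝ → ℝ) (hμ : IsFuzzyField μ)
    (a : ℝ) (ha : a > 0) (hbound : ∀ x : ℝ, μ x ≥ a)
    (x : ℕ → ℝ) (l l' : ℝ)
    (h1 : MuTendsto μ x l) (h2 : MuTendsto μ x l') : l = l' := by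
  exact tendsto_nhds_unique (h1.tendsto ha hbound) (h2.tendsto ha hbound)
end

section
/- Let μ be a fuzzy field membership function on ℝ such that there exists a > 0 with μ(x) ≥ a for all x ∈ ℝ. If a sequence (x_n) of real numbers μ-converges to some l ∈ ℝ, then (x_n) is μ-bounded, i.e., the set {x_n·μ(x_n) : n ∈ ℕ} is bounded in ℝ. -/
theorem stmt_14 (μ : ℝ → ℝ) (hμ : IsFuzzyField μ)
    (a : ℝ) (ha : a > 0) (hbound : ∀ x : ℝ, μ x ≥ a)
    (x : ℕ → ℝ) (l : ℝ) (h : MuTendsto μ x l) :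
    Bornology.IsBounded {y : ℝ | ∃ n : ℕ, y = x n * μ (x n)} := by
  obtain ⟨C, hC⟩ := isBounded_iff_forall_norm_le.1
    (Metric.isBounded_range_of_tendsto x (h.tendsto ha hbound))
  refine isBounded_iff_forall_norm_le.2 ⟨C, ?_⟩
  rintro _ ⟨n, rfl⟩
  obtain ⟨h0, h1⟩ := hμ.1 (x n)
  calc ‖x n * μ (x n)‖ = ‖x n‖ * μ (x n) := by rw [norm_mul, Real.norm_of_nonneg h0]
    _ ≤ ‖x n‖ := mul_le_of_le_one_right (norm_nonneg _) h1
    _ ≤ C := hC _ ⟨n, rfl⟩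
end

section
/- Let μ be a fuzzy field membership function on ℝ such that there exists a > 0 with μ(x) ≥ a for all x ∈ ℝ. If (x_n) μ-converges to l and (y_n) μ-converges to m, then (x_n + y_n) μ-converges to l + m. -/
theorem stmt_16 (μ : ℝ → ℝ) (hμ : IsFuzzyField μ)
    (a : ℝ) (ha : a > 0) (hbound : ∀ x : ℝ, μ x ≥ a)
    (x y : ℕ → ℝ) (l m : ℝ)
    (hx : MuTendsto μ x l) (hy : MuTendsto μ y m) :
    MuTendsto μ (fun n => x n + y n) (l + m) := by
  intro ε hε
  obtain ⟨k₁, hk₁⟩ := hx (a * ε / 2) (by positivity)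
  obtain ⟨k₂, hk₂⟩ := hy (a * ε / 2) (by positivity)
  refine ⟨max k₁ k₂, fun n hn => ?_⟩
  have hxn : |x n - l| * a < a * ε / 2 :=
    (mul_le_mul_of_nonneg_left (hbound _) (abs_nonneg _)).trans_lt
      (hk₁ n (le_of_max_le_left hn))
  have hyn : |y n - m| * a < a * ε / 2 :=
    (mul_le_mul_of_nonneg_left (hbound _) (abs_nonneg _)).trans_lt
      (hk₂ n (le_of_max_le_right hn))
  have hsum : |x n - l| + |y n - m| < ε := by
    refine lt_of_mul_lt_mul_right ?_ ha.le
    linarith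
  calc |x n + y n - (l + m)| * μ (x n + y n - (l + m))
      ≤ |x n + y n - (l + m)| := mul_le_of_le_one_right (abs_nonneg _) (hμ.1 _).2
    _ = |(x n - l) + (y n - m)| := by rw [add_sub_add_comm]
    _ ≤ |x n - l| + |y n - m| := abs_add_le _ _
    _ < ε := hsum
end

section
/- Let μ be a fuzzy field membership function on ℝ such that there exists a > 0 with μ(x) ≥ a for all x ∈ ℝ. If (x_n) μ-converges to l and (y_n) μ-converges to m, then (x_n·y_n) μ-converges to l·m. -/
open Filter Topology in
/-- If `μ` is bounded below by a positive constant, `μ`-convergence implies convergence. -/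
theorem MuTendsto.tendsto_s18 {μ : ℝ → ℝ} {a : ℝ} (ha : 0 < a) (hbound : ∀ t, a ≤ μ t)
    {x : ℕ → ℝ} {l : ℝ} (hx : MuTendsto μ x l) : Tendsto x atTop (𝓝 l) := by
  refine Metric.tendsto_atTop.2 fun ε hε => ?_
  obtain ⟨k, hk⟩ := hx (ε * a) (mul_pos hε ha)
  refine ⟨k, fun n hn => ?_⟩
  rw [Real.dist_eq]
  exact lt_of_mul_lt_mul_right
    ((mul_le_mul_of_nonneg_left (hbound _) (abs_nonneg _)).trans_lt (hk n hn)) ha.le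

open Filter Topology in
/-- If `μ` is bounded above by `1`, convergence implies `μ`-convergence. -/
theorem MuTendsto.of_tendsto {μ : ℝ → ℝ} (hμ : ∀ t, μ t ≤ 1)
    {x : ℕ → ℝ} {l : ℝ} (hx : Tendsto x atTop (𝓝 l)) : MuTendsto μ x l := by
  intro ε hε
  obtain ⟨k, hk⟩ := Metric.tendsto_atTop.1 hx ε hε
  refine ⟨k, fun n hn => ?_⟩
  exact (mul_le_of_le_one_right (abs_nonneg _) (hμ _)).trans_lt (hk n hn)

theorem stmt_18 (μ : ℝ → ℝ) (hμ : IsFuzzyField μ)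
    (a : ℝ) (ha : a > 0) (hbound : ∀ x : ℝ, μ x ≥ a)
    (x y : ℕ → ℝ) (l m : ℝ)
    (hx : MuTendsto μ x l) (hy : MuTendsto μ y m) :
    MuTendsto μ (fun n => x n * y n) (l * m) := by
  exact .of_tendsto (fun t => (hμ.1 t).2) ((hx.tendsto_s18 ha hbound).mul (hy.tendsto_s18 ha hbound))
end
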